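/- Let $N(0,M)$ denote the centered Gaussian on $\mathbb{R}^p$ with covariance $M$ and $N(0,\sigma^2)$ the centered Gaussian on $\mathbb{R}$ with variance $\sigma^2$. Consider the batched node model: $M = LL^\top \in \mathbb{R}^{p\times p}$ is positive definite with $1 \le p \le d$, $A \in \mathbb{R}^p$, $\sigma_y > 0$; for $s = 1,\dots,b$, batch $s$ consists of a design matrix $X^{(s)} \in \mathbb{R}^{k\times p}$ with rows i.i.d. $N(0,M)$ and a noise vector $\eta^{(s)} \in \mathbb{R}^k$ with i.i.d. $N(0,\sigma_y^2)$ entries, all batches and noises mutually independent; let $\tilde A^{(s)} = ((X^{(s)})^\top X^{(s)})^{-1}(X^{(s)})^\top(X^{(s)}A + \eta^{(s)})$ be the batch least-squares solution, $\hat A = \frac1b\sum_{s=1}^b \tilde A^{(s)}$, and $\Delta = \hat A - A$. There exist universal constants $C_k, C_{kb} > 0$ such that for all reals $n \ge 1$, $d_{avg} > 0$ and $\varepsilon, \delta \in (0,1)$: if $k \ge C_k\,\bigl(p + \ln\frac{n}{\varepsilon\delta}\bigr)$ and $k b \ge C_{kb}\cdot\frac{n\, d_{avg}}{\varepsilon}\,\bigl(d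 + \ln\frac{n}{\varepsilon\delta}\bigr)$, then $$\Pr\Bigl( |\Delta^\top M \Delta| \le \sigma_y^2\cdot\frac{\varepsilon\, p}{n\, d_{avg}} \Bigr) \ge 1 - \delta .$$ -/

import Mathlib

open MeasureTheory ProbabilityTheory Matrix

/-- Designs of the `b` batches: `X s r` is the `r`-th row (a vector of `ℝ^p`) of the `k × p`
design matrix of batch `s`. -/
abbrev BatchDesigns (p k b : ℕ) : Type := Fin b → Fin k → EuclideanSpace ℝ (Fin p)

/-- Noises of the `b` batches: `η s r` is the `r`-th entry of the noise vector of batch `s`. -/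
abbrev BatchNoises (k b : ℕ) : Type := Fin b → Fin k → ℝ

/-- Joint law of designs and noises: all rows are i.i.d. `N(0, M)`, all noise entries are i.i.d.
`N(0, σ²)`, and everything is mutually independent. -/
noncomputable def batchLaw {p : ℕ} (k b : ℕ) (M : Matrix (Fin p) (Fin p) ℝ) (σ : ℝ) :
    Measure (BatchDesigns p k b × BatchNoises k b) :=
  (Measure.pi fun _ : Fin b => Measure.pi fun _ : Fin k => multivariateGaussian 0 M).prod
    (Measure.pi fun _ : Fin b => Measure.pi fun _ : Fin k => gaussianReal 0 (σ ^ 2).toNNReal)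

/-- The `k × p` design matrix whose rows are the given vectors. -/
def designMatrix {p k : ℕ} (x : Fin k → EuclideanSpace ℝ (Fin p)) : Matrix (Fin k) (Fin p) ℝ :=
  Matrix.of fun r j => x r j

/-- The least-squares solution `(XᵀX)⁻¹ Xᵀ B`. -/
noncomputable def leastSquares {p k : ℕ} (X : Matrix (Fin k) (Fin p) ℝ) (B : Fin k → ℝ) :
    Fin p → ℝ :=
  (Xᵀ * X)⁻¹ *ᵥ (Xᵀ *ᵥ B)

/-- The average `(1/b) ∑ₛ Ã⁽ˢ⁾` of the batch least-squares solutions, where batch `s` has design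
matrix `X⁽ˢ⁾` and responses `X⁽ˢ⁾ A + η⁽ˢ⁾`. -/
noncomputable def batchAvgLeastSquares {p k b : ℕ} (A : Fin p → ℝ)
    (ω : BatchDesigns p k b × BatchNoises k b) : Fin p → ℝ :=
  (1 / (b : ℝ)) • ∑ s, leastSquares (designMatrix (ω.1 s)) (designMatrix (ω.1 s) *ᵥ A + ω.2 s)

/-!
Applying `√M` to the rows of standard Gaussian designs reduces the claim to `M = 1` and `A = 0`:
if `Z` has full column rank then `R ((ZR)⁺ (Z R A + η) - A) = Z⁺ η` for invertible `R`, where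
`X⁺ = (XᵀX)⁻¹Xᵀ`, so `Δᵀ M Δ = ‖b⁻¹ ∑ₛ Zₛ⁺ ηₛ‖²`. Given the designs, coordinate `j` of that average
is sub-Gaussian with parameter `σ² b⁻¹ v`, where `v` is the mean over the batches of the squared
norms of the `j`-th rows of `Zₛ⁺`.

Bounding every batch's row norm simultaneously would cost a term `log b` in `k`, so the mean `v` is
instead controlled through its `q`-th moment, with `q` of order `p + log (n / (ε δ))`; the Chernoff
bound is accordingly weakened to `exp (-x) ≤ q! x⁻¹ ^ q`. By Jensen one batch suffices. There the
`j`-th row of `Z⁺` has norm the inverse of the distance from column `j` to the span of the other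
columns, and this distance is the norm of a standard Gaussian vector in dimension at least `k - p`.
AM-GM bounds its inverse square by a product of independent small negative powers of coordinates,
whose moments are finite.
-/

section NegativeMoments

variable {ι : Type*} [Fintype ι]

lemma inv_sum_le_inv_card_mul_prod_inv_rpow [Nonempty ι] (y : ι → ENNReal) :
    (∑ i, y i)⁻¹ ≤
      (Fintype.card ι : ENNReal)⁻¹ * ∏ i, (y i)⁻¹ ^ ((Fintype.card ι : ℝ)⁻¹) := by
  rcases em (∃ i, y i = ⊤) with ⟨i, hi⟩ | hy
  · simp [ENNReal.sum_eq_top.2 ⟨i, Finset.mem_univ i, hi⟩]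
  push Not at hy
  lift y to ι → NNReal using hy
  have hcard : (Fintype.card ι : ENNReal) ≠ 0 := by simp
  have hm : (0 : ℝ) ≤ (Fintype.card ι : ℝ)⁻¹ := by positivity
  have amgm : ∏ i, (y i : ENNReal) ^ (Fintype.card ι : ℝ)⁻¹ ≤
      (Fintype.card ι : ENNReal)⁻¹ * ∑ i, (y i : ENNReal) := by
    have h := NNReal.geom_mean_le_arith_mean_weighted Finset.univ
      (fun _ => (Fintype.card ι : NNReal)⁻¹) y (by simp)
    rw [← Finset.mul_sum] at h
    have h' := ENNReal.coe_le_coe.2 h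
    push_cast [ENNReal.coe_rpow_of_nonneg] at h'
    simpa [ENNReal.coe_rpow_of_nonneg _ hm] using h'
  calc (∑ i, (y i : ENNReal))⁻¹
      = (Fintype.card ι : ENNReal)⁻¹ *
          ((Fintype.card ι : ENNReal)⁻¹ * ∑ i, (y i : ENNReal))⁻¹ := by
        rw [ENNReal.mul_inv (by simp) (by simp), inv_inv, ← mul_assoc,
          ENNReal.inv_mul_cancel hcard (by simp), one_mul]
    _ ≤ (Fintype.card ι : ENNReal)⁻¹ * (∏ i, (y i : ENNReal) ^ (Fintype.card ι : ℝ)⁻¹)⁻¹ := by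
        gcongr
    _ = _ := by
        rw [ENNReal.prod_inv_distrib fun i _ j _ _ =>
          Or.inr (ENNReal.rpow_ne_top_of_nonneg hm ENNReal.coe_ne_top)]
        simp_rw [ENNReal.inv_rpow]

lemma lintegral_pi_prod {X : ι → Type*} {mX : ∀ i, MeasurableSpace (X i)}
    {μ : ∀ i, Measure (X i)} [∀ i, IsProbabilityMeasure (μ i)]
    {f : ∀ i, X i → ENNReal} (hf : ∀ i, Measurable (f i)) :
    ∫⁻ x, ∏ i, f i (x i) ∂(Measure.pi μ) = ∏ i, ∫⁻ y, f i y ∂(μ i) := by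
  rw [lintegral_prod_eq_prod_lintegral_of_indepFun Finset.univ
    (fun i (x : ∀ i, X i) => f i (x i)) (iIndepFun_pi fun i => (hf i).aemeasurable)
    fun i => (hf i).comp (measurable_pi_apply i)]
  exact Finset.prod_congr rfl fun i _ => (measurePreserving_eval μ i).lintegral_comp (hf i)

lemma lintegral_pi_inv_sum_pow_le {α : Type*} {mα : MeasurableSpace α} {μ : Measure α}
    [IsProbabilityMeasure μ] {f : α → ENNReal} (hf : Measurable f) {r : ℝ} {q : ℕ} (hq : 0 < q)
    (hqr : q ≤ r * Fintype.card ι) :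
    ∫⁻ x : ι → α, ((∑ i, f (x i))⁻¹) ^ q ∂(Measure.pi fun _ => μ) ≤
      ((Fintype.card ι : ENNReal)⁻¹ * eLpNorm' (fun x => (f x)⁻¹) r μ) ^ q := by
  have hcard : Fintype.card ι ≠ 0 := fun h => by
    simp only [h, CharP.cast_eq_zero, mul_zero, Nat.cast_nonpos] at hqr
    omega
  have : Nonempty ι := Fintype.card_pos_iff.1 (Nat.pos_of_ne_zero hcard)
  have hm : (0 : ℝ) < Fintype.card ι := by positivity
  have hs : (0 : ℝ) < q / Fintype.card ι := by positivity
  calc ∫⁻ x : ι → α, ((∑ i, f (x i))⁻¹) ^ q ∂(Measure.pi fun _ => μ)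
      ≤ ∫⁻ x : ι → α, ((Fintype.card ι : ENNReal)⁻¹) ^ q *
          ∏ i, (f (x i))⁻¹ ^ (q / Fintype.card ι : ℝ) ∂(Measure.pi fun _ => μ) := by
        gcongr with x
        refine (pow_le_pow_left' (inv_sum_le_inv_card_mul_prod_inv_rpow _) q).trans_eq ?_
        simp_rw [mul_pow, ← Finset.prod_pow, ← ENNReal.rpow_mul_natCast, inv_mul_eq_div]
    _ = ((Fintype.card ι : ENNReal)⁻¹) ^ q *
          (eLpNorm' (fun x => (f x)⁻¹) (q / Fintype.card ι) μ) ^ q := by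
        rw [lintegral_const_mul _ (by fun_prop), lintegral_pi_prod
          (f := fun _ y => (f y)⁻¹ ^ (q / Fintype.card ι : ℝ)) fun _ => by fun_prop,
          Finset.prod_const, Finset.card_univ, eLpNorm', ← ENNReal.rpow_mul_natCast,
          ← ENNReal.rpow_natCast _ (Fintype.card ι)]
        congr 2
        field_simp
    _ ≤ _ := by
        rw [← mul_pow]
        gcongr
        exact eLpNorm'_le_eLpNorm'_of_exponent_le hs ((div_le_iff₀ hm).2 hqr) μ
          hf.inv.aestronglyMeasurable

end NegativeMoments

section StdGaussian

/-- The norm of `1 / g²` in `L^(1/4)` for a standard Gaussian variable `g`; the exponent `1/4` is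
small enough for this to be finite. It controls the negative moments of Gaussian norms. -/
noncomputable def gaussianInvSqNorm : ENNReal :=
  eLpNorm' (fun x : ℝ => (‖x‖ₑ ^ 2)⁻¹) (1 / 4) (gaussianReal 0 1)

lemma integrable_abs_rpow_mul_exp_neg_mul_sq {c s : ℝ} (hc : 0 < c) (hs : -1 < s) :
    Integrable fun x : ℝ => |x| ^ s * Real.exp (-c * x ^ 2) := by
  have hpos : IntegrableOn (fun x : ℝ => |x| ^ s * Real.exp (-c * x ^ 2)) (Set.Ioi 0) :=
    (integrableOn_rpow_mul_exp_neg_mul_sq hc hs).congr_fun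
      (fun x hx => by simp only [abs_of_pos (Set.mem_Ioi.1 hx)]) measurableSet_Ioi
  have hneg : IntegrableOn (fun x : ℝ => |x| ^ s * Real.exp (-c * x ^ 2)) (Set.Iio 0) := by
    simpa [Function.comp_def] using
      ((Measure.measurePreserving_neg (volume : Measure ℝ)).integrableOn_comp_preimage
        (Homeomorph.neg ℝ).measurableEmbedding (s := Set.Ioi 0)).2 hpos
  rw [← integrableOn_univ, ← Set.Iic_union_Ioi (a := (0 : ℝ)), integrableOn_union,
    integrableOn_Iic_iff_integrableOn_Iio]
  exact ⟨hneg, hpos⟩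

lemma integrable_abs_rpow_gaussianReal {s : ℝ} (hs : -1 < s) :
    Integrable (fun x : ℝ => |x| ^ s) (gaussianReal 0 1) := by
  rw [gaussianReal_of_var_ne_zero _ one_ne_zero,
    integrable_withDensity_iff_integrable_smul' (by fun_prop)
      (.of_forall fun _ => gaussianPDF_lt_top)]
  refine ((integrable_abs_rpow_mul_exp_neg_mul_sq (c := 1 / 2) (by norm_num) hs).const_mul
    (√(2 * Real.pi))⁻¹).congr (.of_forall fun x => ?_)
  simp only [toReal_gaussianPDF, gaussianPDFReal, smul_eq_mul,
    NNReal.coe_one, mul_one, sub_zero]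
  ring_nf

lemma gaussianInvSqNorm_ne_top : gaussianInvSqNorm ≠ ⊤ := by
  have hint := integrable_abs_rpow_gaussianReal (s := -(1 / 2)) (by norm_num)
  have : NullSingletonClass (gaussianReal 0 1) := nullSingletonClass_gaussianReal one_ne_zero
  refine ENNReal.rpow_ne_top_of_nonneg (by norm_num) (ne_of_lt (lt_of_eq_of_lt ?_ hint.2))
  refine lintegral_congr_ae ?_
  filter_upwards [Measure.ae_ne (gaussianReal 0 1) (0 : ℝ)] with x hx
  have habs : 0 < |x| := abs_pos.2 hx
  rw [enorm_eq_self, Real.enorm_eq_ofReal_abs, Real.enorm_of_nonneg (by positivity),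
    ← ENNReal.ofReal_rpow_of_pos habs, ENNReal.inv_rpow, ← ENNReal.rpow_natCast,
    ← ENNReal.rpow_mul, ← ENNReal.rpow_neg]
  norm_num

variable {E : Type*} [NormedAddCommGroup E] [InnerProductSpace ℝ E] [FiniteDimensional ℝ E]
  [MeasurableSpace E] [BorelSpace E]

lemma lintegral_stdGaussian_inv_enorm_sq_pow_le {q : ℕ} (hq : 0 < q)
    (hE : 4 * q ≤ Module.finrank ℝ E) :
    ∫⁻ z, ((‖z‖ₑ ^ 2)⁻¹) ^ q ∂(stdGaussian E) ≤
      ((Module.finrank ℝ E : ENNReal)⁻¹ * gaussianInvSqNorm) ^ q := by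
  have hnorm (x : Fin (Module.finrank ℝ E) → ℝ) :
      ‖∑ i, x i • stdOrthonormalBasis ℝ E i‖ₑ ^ 2 = ∑ i, ‖x i‖ₑ ^ 2 := by
    simp_rw [enorm_eq_nnnorm, ← ENNReal.coe_pow, ← ENNReal.ofNNReal_finsetSum, ENNReal.coe_inj,
      ← NNReal.coe_inj]
    push_cast
    rw [← (stdOrthonormalBasis ℝ E).sum_sq_norm_inner_right]
    simp [(stdOrthonormalBasis ℝ E).orthonormal.inner_right_fintype]
  have hqr : (q : ℝ) ≤ 1 / 4 * Fintype.card (Fin (Module.finrank ℝ E)) := by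
    rw [Fintype.card_fin]
    have : (4 * q : ℝ) ≤ Module.finrank ℝ E := mod_cast hE
    linarith
  rw [stdGaussian, lintegral_map (by fun_prop) (by fun_prop)]
  simp_rw [hnorm]
  simpa [gaussianInvSqNorm] using
    lintegral_pi_inv_sum_pow_le (f := fun x : ℝ => ‖x‖ₑ ^ 2) (by fun_prop) hq hqr

lemma map_orthogonalProjectionOnto_stdGaussian (U : Submodule ℝ E) :
    (stdGaussian E).map U.orthogonalProjectionOnto = stdGaussian U := by
  refine Measure.ext_of_charFun (funext fun t => ?_)
  rw [charFun_stdGaussian, charFun_apply, integral_map (by fun_prop) (by fun_prop)]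
  simp_rw [Submodule.inner_orthogonalProjectionOnto_eq_of_mem_right]
  rw [← charFun_apply, charFun_stdGaussian, U.coe_norm]

lemma lintegral_stdGaussian_inv_enorm_starProjection_sq_pow_le (U : Submodule ℝ E) {q : ℕ}
    (hq : 0 < q) (hU : 4 * q ≤ Module.finrank ℝ U) :
    ∫⁻ z, ((‖U.starProjection z‖ₑ ^ 2)⁻¹) ^ q ∂(stdGaussian E) ≤
      ((Module.finrank ℝ U : ENNReal)⁻¹ * gaussianInvSqNorm) ^ q := by
  have h := lintegral_stdGaussian_inv_enorm_sq_pow_le (E := U) hq hU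
  rwa [← map_orthogonalProjectionOnto_stdGaussian, lintegral_map (by fun_prop) (by fun_prop)] at h

lemma stdGaussian_submodule_eq_zero {W : Submodule ℝ E} (hW : W ≠ ⊤) : stdGaussian E W = 0 := by
  obtain ⟨w, hwW, hw⟩ := (Submodule.ne_bot_iff _).1 (W.orthogonal_eq_bot_iff.not.2 hW)
  let L := innerSL ℝ w
  have hvar : Var[L; stdGaussian E].toNNReal ≠ 0 := by
    rw [variance_dual_stdGaussian, innerSL_apply_norm]
    exact (Real.toNNReal_pos.2 (by positivity)).ne'
  have : NullSingletonClass (gaussianReal 0 Var[L; stdGaussian E].toNNReal) :=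
    nullSingletonClass_gaussianReal hvar
  have hmap := IsGaussian.map_eq_gaussianReal (μ := stdGaussian E) L
  rw [integral_strongDual_stdGaussian] at hmap
  refine measure_mono_null (t := L ⁻¹' {0}) (fun z hz => ?_) ?_
  · exact Submodule.inner_left_of_mem_orthogonal hz hwW
  · rw [← Measure.map_apply (by fun_prop) (measurableSet_singleton 0), hmap, measure_singleton]

end StdGaussian

section RandomFamilies

variable {ι : Type*} [Fintype ι]

lemma measurePreserving_update [DecidableEq ι] {X : ι → Type*} {mX : ∀ i, MeasurableSpace (X i)}
    (μ : ∀ i, Measure (X i)) [∀ i, IsProbabilityMeasure (μ i)] (j : ι) :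
    MeasurePreserving (fun x : (∀ i, X i) × X j => Function.update x.1 j x.2)
      ((Measure.pi μ).prod (μ j)) (Measure.pi μ) := by
  have hmeas : Measurable fun x : (∀ i, X i) × X j => Function.update x.1 j x.2 :=
    measurable_update'
  refine ⟨hmeas, (Measure.pi_eq fun s hs => ?_).symm⟩
  have hpre : (fun x : (∀ i, X i) × X j => Function.update x.1 j x.2) ⁻¹' Set.univ.pi s =
      Set.univ.pi (Function.update s j Set.univ) ×ˢ s j := by
    ext x
    simp only [Set.mem_preimage, Set.mem_univ_pi, Set.mem_prod]
    grind
  rw [Measure.map_apply hmeas (.univ_pi hs), hpre, Measure.prod_prod, Measure.pi_pi,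
    ← Finset.mul_prod_erase _ _ (Finset.mem_univ j), Function.update_self, measure_univ, one_mul,
    mul_comm, ← Finset.mul_prod_erase _ (fun i => μ i (s i)) (Finset.mem_univ j)]
  congr 1
  exact Finset.prod_congr rfl fun i hi => by
    rw [Function.update_of_ne (Finset.ne_of_mem_erase hi)]

lemma measurePreserving_curry {κ X : Type*} [Fintype κ] [MeasurableSpace X]
    (μ : ι → κ → Measure X) [∀ i j, IsProbabilityMeasure (μ i j)] :
    MeasurePreserving (MeasurableEquiv.curry ι κ X) (Measure.pi fun p : ι × κ => μ p.1 p.2)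
      (Measure.pi fun i => Measure.pi (μ i)) :=
  ⟨by fun_prop, by simpa only [Measure.infinitePi_eq_pi] using Measure.infinitePi_map_curry μ⟩

lemma measurePreserving_pi_swap {κ X : Type*} [Fintype κ] [MeasurableSpace X]
    (μ : ι → κ → Measure X) [∀ i j, IsProbabilityMeasure (μ i j)] :
    MeasurePreserving (fun (x : ι → κ → X) j i => x i j)
      (Measure.pi fun i => Measure.pi fun j => μ i j)
      (Measure.pi fun j => Measure.pi fun i => μ i j) :=
  (measurePreserving_curry fun j i => μ i j).comp
    ((measurePreserving_piCongrLeft (fun p : κ × ι => μ p.2 p.1) (Equiv.prodComm ι κ)).comp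
      (MeasurePreserving.symm _ (measurePreserving_curry μ)))

variable {E : Type*} [NormedAddCommGroup E] [NormedSpace ℝ E] [FiniteDimensional ℝ E]
  [MeasurableSpace E] [BorelSpace E]

lemma measurableSet_linearIndepOn {κ : Type*} [Finite κ] (s : Set κ) :
    MeasurableSet {v : κ → E | LinearIndepOn ℝ v s} :=
  (isOpen_setOfPred_linearIndependent.preimage (by fun_prop :
    Continuous fun (v : κ → E) (i : s) => v i)).measurableSet

lemma ae_linearIndependent_pi {μ : ι → Measure E} [∀ i, IsProbabilityMeasure (μ i)]
    (hμ : ∀ i, ∀ W : Submodule ℝ E, W ≠ ⊤ → μ i W = 0)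
    (hcard : Fintype.card ι ≤ Module.finrank ℝ E) :
    ∀ᵐ v ∂(Measure.pi μ), LinearIndependent ℝ v := by
  classical
  suffices h : ∀ s : Finset ι, ∀ᵐ v ∂(Measure.pi μ), LinearIndepOn ℝ v s by
    filter_upwards [h Finset.univ] with v hv
    rwa [Finset.coe_univ, linearIndepOn_univ_iff] at hv
  intro s
  induction s using Finset.induction_on with
  | empty => simp
  | insert a s ha ih =>
    have hmeas := measurableSet_linearIndepOn (E := E) (insert a s : Set ι)
    have hupd := measurePreserving_update μ a
    rw [Finset.coe_insert, ← hupd.map_eq, ae_map_iff hupd.measurable.aemeasurable hmeas]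
    refine (Measure.ae_prod_iff_ae_ae (hupd.measurable hmeas)).2 ?_
    filter_upwards [ih] with v hv
    have hspan : Submodule.span ℝ (v '' s) ≠ ⊤ := fun htop => by
      have hle := finrank_span_finset_le_card (R := ℝ) (s.image v)
      rw [Finset.coe_image, Set.finrank, htop, finrank_top] at hle
      have hlt := Finset.card_lt_univ_of_notMem ha
      have := hle.trans Finset.card_image_le
      omega
    filter_upwards [measure_eq_zero_iff_ae_notMem.1 (hμ a _ hspan)] with c hc
    have heq : Set.EqOn (Function.update v a c) v s := fun i hi =>
      Function.update_of_ne (ne_of_mem_of_not_mem (Finset.mem_coe.1 hi) ha) _ _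
    rw [linearIndepOn_insert (by simpa using ha), linearIndepOn_congr heq, heq.image_eq,
      Function.update_self]
    exact ⟨hv, hc⟩

end RandomFamilies

section DualVector

variable {ι E : Type*} [NormedAddCommGroup E] [InnerProductSpace ℝ E] [FiniteDimensional ℝ E]

open scoped RealInnerProductSpace

lemma norm_sq_mul_norm_sq_starProjection_eq_one {v : ι → E} {w : E} {j : ι}
    (hw : w ∈ Submodule.span ℝ (Set.range v)) (hj : ⟪v j, w⟫ = 1)
    (hne : ∀ i ≠ j, ⟪v i, w⟫ = 0) :
    ‖w‖ ^ 2 * ‖(Submodule.span ℝ (v '' {j}ᶜ))ᗮ.starProjection (v j)‖ ^ 2 = 1 := by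
  set K := Submodule.span ℝ (v '' {j}ᶜ)
  have hwK : w ∈ Kᗮ := by
    have hle : K ≤ (ℝ ∙ w)ᗮ := Submodule.span_le.2 <| by
      rintro _ ⟨i, hi, rfl⟩
      exact Submodule.mem_orthogonal_singleton_iff_inner_left.2 (hne i hi)
    exact (Submodule.mem_orthogonal _ _).2 fun u hu =>
      Submodule.mem_orthogonal_singleton_iff_inner_left.1 (hle hu)
  obtain ⟨g, u, hu, rfl⟩ : ∃ g : ℝ, ∃ u ∈ K, w = g • v j + u := by
    rwa [← Set.image_univ, ← Set.union_compl_self {j}, Set.image_union, Set.image_singleton,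
      Set.singleton_union, Submodule.mem_span_insert] at hw
  have hproj : g • v j + u = g • Kᗮ.starProjection (v j) := by
    have hPu : Kᗮ.starProjection u = 0 := by
      rwa [Submodule.starProjection_apply_eq_zero_iff, Submodule.orthogonal_orthogonal]
    conv_lhs => rw [← Submodule.starProjection_eq_self_iff.2 hwK, map_add, map_smul, hPu, add_zero]
  have hone : g * ‖Kᗮ.starProjection (v j)‖ ^ 2 = 1 := by
    rwa [← Submodule.starProjection_eq_self_iff.2 hwK,
      ← Submodule.inner_starProjection_left_eq_right, hproj, real_inner_smul_right,
      real_inner_self_eq_norm_sq] at hj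
  rw [hproj, norm_smul, mul_pow, Real.norm_eq_abs, sq_abs]
  linear_combination (g * ‖Kᗮ.starProjection (v j)‖ ^ 2 + 1) * hone

end DualVector

section MatrixOfColumns

variable {m n : Type*} [Fintype m]

/-- The matrix whose columns are the vectors `v j`. -/
def matrixOfColumns (v : n → EuclideanSpace ℝ m) : Matrix m n ℝ := Matrix.of fun i j => v j i

lemma transpose_mul_self_matrixOfColumns (v : n → EuclideanSpace ℝ m) :
    (matrixOfColumns v)ᵀ * matrixOfColumns v = gram ℝ v := by
  ext i j
  simp [matrixOfColumns, gram_apply, Matrix.mul_apply, PiLp.inner_apply, mul_comm]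

lemma card_sub_card_le_finrank_orthogonal_span [Fintype n] (v : n → EuclideanSpace ℝ m)
    (s : Set n) :
    Fintype.card m - Fintype.card n ≤ Module.finrank ℝ (Submodule.span ℝ (v '' s))ᗮ := by
  have hle := Submodule.finrank_mono (Submodule.span_mono (R := ℝ) (Set.image_subset_range v s))
  have hrange : Module.finrank ℝ (Submodule.span ℝ (Set.range v)) ≤ Fintype.card n :=
    finrank_range_le_card v
  have hadd := Submodule.finrank_add_finrank_orthogonal (Submodule.span ℝ (v '' s))
  rw [finrank_euclideanSpace] at hadd
  omega

lemma measurePreserving_toLp_stdGaussian :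
    MeasurePreserving (MeasurableEquiv.toLp 2 (m → ℝ)) (Measure.pi fun _ => gaussianReal 0 1)
      (stdGaussian (EuclideanSpace ℝ m)) :=
  ⟨by fun_prop, map_pi_eq_stdGaussian⟩

lemma measurePreserving_columns [Fintype n] :
    MeasurePreserving (fun (x : m → EuclideanSpace ℝ n) j => WithLp.toLp 2 fun i => x i j)
      (Measure.pi fun _ => stdGaussian (EuclideanSpace ℝ n))
      (Measure.pi fun _ => stdGaussian (EuclideanSpace ℝ m)) :=
  (measurePreserving_pi _ _ fun _ => measurePreserving_toLp_stdGaussian).comp <|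
    (measurePreserving_pi_swap fun _ _ => gaussianReal 0 1).comp <|
      measurePreserving_pi _ _ fun _ => measurePreserving_toLp_stdGaussian.symm

end MatrixOfColumns

section LeastSquaresMatrix

variable {m n : Type*} [Fintype m] [Fintype n] [DecidableEq n]

/-- The least-squares solution operator `(XᵀX)⁻¹Xᵀ`, sending the responses to the fitted
coefficients. As `⁻¹` of a singular matrix is `0`, it vanishes when the columns of `X` are linearly
dependent. -/
noncomputable def leastSquaresMatrix (X : Matrix m n ℝ) : Matrix n m ℝ := (Xᵀ * X)⁻¹ * Xᵀ

lemma leastSquares_eq_leastSquaresMatrix_mulVec {p k : ℕ} (X : Matrix (Fin k) (Fin p) ℝ)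
    (B : Fin k → ℝ) : leastSquares X B = leastSquaresMatrix X *ᵥ B :=
  mulVec_mulVec _ _ _

lemma leastSquaresMatrix_mul_self {X : Matrix m n ℝ} (hX : IsUnit (Xᵀ * X).det) :
    leastSquaresMatrix X * X = 1 := by
  rw [leastSquaresMatrix, Matrix.mul_assoc, nonsing_inv_mul _ hX]

lemma mul_leastSquaresMatrix_mul (X : Matrix m n ℝ) {R : Matrix n n ℝ} (hR : IsUnit R.det) :
    R * leastSquaresMatrix (X * R) = leastSquaresMatrix X := by
  have hRt : IsUnit Rᵀ.det := by rwa [det_transpose]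
  have hgram : (X * R)ᵀ * (X * R) = Rᵀ * (Xᵀ * X) * R := by
    simp only [transpose_mul, Matrix.mul_assoc]
  rw [leastSquaresMatrix, hgram, Matrix.mul_inv_rev, Matrix.mul_inv_rev, transpose_mul,
    Matrix.mul_assoc, Matrix.mul_assoc, mul_nonsing_inv_cancel_left _ _ hR,
    nonsing_inv_mul_cancel_left _ _ hRt, leastSquaresMatrix]

lemma isUnit_det_transpose_mul_self_matrixOfColumns_iff {v : n → EuclideanSpace ℝ m} :
    IsUnit ((matrixOfColumns v)ᵀ * matrixOfColumns v).det ↔ LinearIndependent ℝ v := by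
  rw [transpose_mul_self_matrixOfColumns, isUnit_iff_ne_zero,
    det_gram_ne_zero_iff_linearIndependent]

lemma measurable_leastSquaresMatrix_matrixOfColumns (j : n) (i : m) :
    Measurable fun v : n → EuclideanSpace ℝ m => leastSquaresMatrix (matrixOfColumns v) j i := by
  have hX : Continuous fun v : n → EuclideanSpace ℝ m => matrixOfColumns v :=
    continuous_matrix fun i j => by simp only [matrixOfColumns, of_apply]; fun_prop
  have hgram : Continuous fun v : n → EuclideanSpace ℝ m =>
      (matrixOfColumns v)ᵀ * matrixOfColumns v :=
    hX.matrix_transpose.matrix_mul hX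
  simp only [leastSquaresMatrix, inv_def, Ring.inverse_eq_inv', smul_mul, Matrix.smul_apply,
    smul_eq_mul]
  exact hgram.matrix_det.measurable.inv.mul
    ((hgram.matrix_adjugate.matrix_mul hX.matrix_transpose).matrix_elem j i).measurable

lemma enorm_sq_leastSquaresMatrix_row_le (v : n → EuclideanSpace ℝ m) (j : n) :
    ‖WithLp.toLp 2 ((leastSquaresMatrix (matrixOfColumns v)).row j)‖ₑ ^ 2 ≤
      (‖(Submodule.span ℝ (v '' {j}ᶜ))ᗮ.starProjection (v j)‖ₑ ^ 2)⁻¹ := by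
  set X := matrixOfColumns v with hX
  set w := WithLp.toLp 2 ((leastSquaresMatrix X).row j) with hw
  by_cases hdet : IsUnit (Xᵀ * X).det
  · have hinner (i : n) : inner ℝ (v i) w = (1 : Matrix n n ℝ) j i := by
      rw [← leastSquaresMatrix_mul_self hdet]
      simp [hw, hX, matrixOfColumns, PiLp.inner_apply, Matrix.mul_apply]
    have hspan : w ∈ Submodule.span ℝ (Set.range v) := by
      have hcomb : w = ∑ i, (Xᵀ * X)⁻¹ j i • v i := by
        ext r
        rw [hw, leastSquaresMatrix, PiLp.toLp_apply, row_apply, Matrix.mul_apply]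
        simp [hX, matrixOfColumns]
      rw [hcomb]
      exact Submodule.sum_smul_mem _ _ fun i _ => Submodule.subset_span ⟨i, rfl⟩
    have hone := norm_sq_mul_norm_sq_starProjection_eq_one hspan
      (by rw [hinner, one_apply_eq]) fun i hi => by rw [hinner, one_apply_ne hi.symm]
    refine (ENNReal.eq_inv_of_mul_eq_one_left ?_).le
    simp only [← ofReal_norm, ← ENNReal.ofReal_pow (norm_nonneg _)]
    rw [← ENNReal.ofReal_mul (by positivity), hone, ENNReal.ofReal_one]
  · have hzero : w = 0 := by
      ext r
      simp [hw, leastSquaresMatrix, nonsing_inv_apply_not_isUnit _ hdet]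
    simp [hzero]

lemma measurable_leastSquaresMatrix_row (j : n) :
    Measurable fun v : n → EuclideanSpace ℝ m =>
      WithLp.toLp 2 ((leastSquaresMatrix (matrixOfColumns v)).row j) :=
  (WithLp.measurable_toLp 2 _).comp
    (measurable_pi_lambda _ fun i => measurable_leastSquaresMatrix_matrixOfColumns j i)

lemma lintegral_pi_stdGaussian_leastSquaresMatrix_row_pow_le {q : ℕ} (hq : 0 < q)
    (hcard : Fintype.card n + 4 * q ≤ Fintype.card m) (j : n) :
    ∫⁻ v, (‖WithLp.toLp 2 ((leastSquaresMatrix (matrixOfColumns v)).row j)‖ₑ ^ 2) ^ q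
        ∂(Measure.pi fun _ : n => stdGaussian (EuclideanSpace ℝ m)) ≤
      (((Fintype.card m - Fintype.card n : ℕ) : ENNReal)⁻¹ * gaussianInvSqNorm) ^ q := by
  have hmeas := ((measurable_leastSquaresMatrix_row (m := m) j).enorm.pow_const 2).pow_const q
  have hupd := measurePreserving_update (fun _ : n => stdGaussian (EuclideanSpace ℝ m)) j
  rw [← hupd.lintegral_comp hmeas, lintegral_prod]
  swap
  · exact (hmeas.comp hupd.measurable).aemeasurable
  refine (lintegral_mono fun v => ?_).trans_eq ((lintegral_const _).trans
    (by rw [measure_univ, mul_one]))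
  set U := (Submodule.span ℝ (v '' {j}ᶜ))ᗮ
  have hU : Fintype.card m - Fintype.card n ≤ Module.finrank ℝ U :=
    card_sub_card_le_finrank_orthogonal_span v {j}ᶜ
  calc _ ≤ ∫⁻ c, ((‖U.starProjection c‖ₑ ^ 2)⁻¹) ^ q ∂stdGaussian (EuclideanSpace ℝ m) := by
        refine lintegral_mono fun c => ?_
        have heq : Set.EqOn (Function.update v j c) v {j}ᶜ := fun i hi =>
          Function.update_of_ne hi _ _
        have hle := enorm_sq_leastSquaresMatrix_row_le (Function.update v j c) j
        rw [heq.image_eq, Function.update_self] at hle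
        gcongr
    _ ≤ ((Module.finrank ℝ U : ENNReal)⁻¹ * gaussianInvSqNorm) ^ q :=
        lintegral_stdGaussian_inv_enorm_starProjection_sq_pow_le U hq (by omega)
    _ ≤ _ := by gcongr

end LeastSquaresMatrix

section GaussianDesign

variable {p k : ℕ}

lemma designMatrix_eq_matrixOfColumns (x : Fin k → EuclideanSpace ℝ (Fin p)) :
    designMatrix x = matrixOfColumns fun j => WithLp.toLp 2 fun r => x r j :=
  rfl

lemma measurable_leastSquaresMatrix_designMatrix_row (j : Fin p) :
    Measurable fun x : Fin k → EuclideanSpace ℝ (Fin p) =>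
      WithLp.toLp 2 ((leastSquaresMatrix (designMatrix x)).row j) := by
  simp only [designMatrix_eq_matrixOfColumns]
  exact (measurable_leastSquaresMatrix_row j).comp measurePreserving_columns.measurable

lemma ae_isUnit_det_transpose_mul_self_designMatrix (hpk : p ≤ k) :
    ∀ᵐ x ∂(Measure.pi fun _ : Fin k => stdGaussian (EuclideanSpace ℝ (Fin p))),
      IsUnit ((designMatrix x)ᵀ * designMatrix x).det := by
  have hLI := ae_linearIndependent_pi (ι := Fin p)
    (fun _ _ => stdGaussian_submodule_eq_zero (E := EuclideanSpace ℝ (Fin k))) (by simpa)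
  filter_upwards [measurePreserving_columns.quasiMeasurePreserving.ae hLI] with x hx
  exact isUnit_det_transpose_mul_self_matrixOfColumns_iff.2 hx

lemma lintegral_leastSquaresMatrix_designMatrix_row_pow_le {q : ℕ} (hq : 0 < q)
    (hk : p + 4 * q ≤ k) (j : Fin p) :
    ∫⁻ x, (‖WithLp.toLp 2 ((leastSquaresMatrix (designMatrix x)).row j)‖ₑ ^ 2) ^ q
        ∂(Measure.pi fun _ : Fin k => stdGaussian (EuclideanSpace ℝ (Fin p))) ≤
      (((k - p : ℕ) : ENNReal)⁻¹ * gaussianInvSqNorm) ^ q := by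
  have hmeas := ((measurable_leastSquaresMatrix_row (m := Fin k) j).enorm.pow_const 2).pow_const q
  have hle := lintegral_pi_stdGaussian_leastSquaresMatrix_row_pow_le (m := Fin k) hq (by simpa) j
  rw [← measurePreserving_columns.lintegral_comp hmeas] at hle
  simpa only [designMatrix_eq_matrixOfColumns, Fintype.card_fin] using hle

end GaussianDesign

section SubGaussian

lemma hasSubgaussianMGF_id_gaussianReal (v : NNReal) :
    HasSubgaussianMGF id v (gaussianReal 0 v) where
  integrable_exp_mul t := integrable_exp_mul_gaussianReal t
  mgf_le t := by simp [mgf_id_gaussianReal]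

lemma hasSubgaussianMGF_sum_pi {ι : Type*} [Fintype ι] {Ω : ι → Type*}
    {mΩ : ∀ i, MeasurableSpace (Ω i)} {μ : ∀ i, Measure (Ω i)} [∀ i, IsProbabilityMeasure (μ i)]
    {X : ∀ i, Ω i → ℝ} {c : ι → NNReal} (h : ∀ i, HasSubgaussianMGF (X i) (c i) (μ i)) :
    HasSubgaussianMGF (fun ω => ∑ i, X i (ω i)) (∑ i, c i) (Measure.pi μ) := by
  refine .sum_of_iIndepFun (iIndepFun_pi fun i => (h i).aemeasurable) fun i _ => ?_
  refine HasSubgaussianMGF.of_map (measurable_pi_apply i).aemeasurable ?_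
  rw [(measurePreserving_eval μ i).map_eq]
  exact h i

lemma hasSubgaussianMGF_dotProduct_pi_gaussianReal {ι : Type*} [Fintype ι] (v : NNReal)
    (a : ι → ℝ) :
    HasSubgaussianMGF (fun η => a ⬝ᵥ η) (‖WithLp.toLp 2 a‖₊ ^ 2 * v)
      (Measure.pi fun _ : ι => gaussianReal 0 v) := by
  have hsum := hasSubgaussianMGF_sum_pi fun i =>
    (hasSubgaussianMGF_id_gaussianReal v).const_mul (a i)
  have hnorm : ‖WithLp.toLp 2 a‖₊ ^ 2 * v = ∑ i, .mk (a i ^ 2) (sq_nonneg (a i)) * v := by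
    rw [← Finset.sum_mul, EuclideanSpace.nnnorm_eq, NNReal.sq_sqrt]
    congr! with i
    ext
    simp
  rw [hnorm]
  exact hsum

lemma exp_neg_le_factorial_mul_inv_pow {x : ℝ} (hx : 0 < x) (q : ℕ) :
    Real.exp (-x) ≤ q.factorial * x⁻¹ ^ q := by
  have h := Real.pow_div_factorial_le_exp x hx.le q
  rw [Real.exp_neg, inv_pow, ← div_eq_mul_inv]
  exact (inv_anti₀ (by positivity) h).trans_eq (inv_div _ _)

variable {Ω : Type*} {mΩ : MeasurableSpace Ω} {μ : Measure Ω} {X : Ω → ℝ} {c : NNReal}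

lemma measureReal_le_sq_le_exp [IsFiniteMeasure μ] (h : HasSubgaussianMGF X c μ) {θ : ℝ}
    (hθ : 0 ≤ θ) :
    μ.real {ω | θ ≤ X ω ^ 2} ≤ 2 * Real.exp (-θ / (2 * c)) := by
  have hsub : {ω | θ ≤ X ω ^ 2} ⊆ {ω | √θ ≤ X ω} ∪ {ω | √θ ≤ (-X) ω} := fun ω hω =>
    le_abs.1 ((Real.sqrt_le_sqrt hω).trans_eq (Real.sqrt_sq_eq_abs _))
  have hpos := h.measure_ge_le (Real.sqrt_nonneg θ)
  have hneg := h.neg.measure_ge_le (Real.sqrt_nonneg θ)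
  rw [Real.sq_sqrt hθ] at hpos hneg
  linarith [(measureReal_mono (μ := μ) hsub).trans (measureReal_union_le _ _)]

lemma measure_le_sq_le_factorial_mul_pow [IsFiniteMeasure μ] (h : HasSubgaussianMGF X c μ)
    {θ : NNReal} (hθ : θ ≠ 0) (q : ℕ) :
    μ {ω | (θ : ℝ) ≤ X ω ^ 2} ≤ 2 * q.factorial * (2 * c / θ : ENNReal) ^ q := by
  rcases eq_or_ne c 0 with rfl | hc
  · have hzero : μ {ω | (θ : ℝ) ≤ X ω ^ 2} = 0 := by
      refine measure_eq_zero_iff_ae_notMem.2 ?_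
      filter_upwards [h.ae_eq_zero_of_hasSubgaussianMGF_zero] with ω hω
      simpa [hω] using pos_iff_ne_zero.2 hθ
    rw [hzero]
    exact zero_le
  · have htail := measureReal_le_sq_le_exp h θ.coe_nonneg
    have hexp := exp_neg_le_factorial_mul_inv_pow (x := θ / (2 * c)) (by positivity) q
    rw [inv_div, ← neg_div] at hexp
    calc μ {ω | (θ : ℝ) ≤ X ω ^ 2} = ENNReal.ofReal (μ.real {ω | (θ : ℝ) ≤ X ω ^ 2}) :=
          (ofReal_measureReal).symm
      _ ≤ ENNReal.ofReal ((2 * q.factorial * (2 * c / θ) ^ q : NNReal) : ℝ) := by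
          gcongr
          push_cast
          linarith
      _ = _ := by
          rw [ENNReal.ofReal_coe_nnreal]
          push_cast [ENNReal.coe_div hθ]
          rfl

end SubGaussian

lemma lintegral_pi_mean_pow_le {ι α : Type*} [Fintype ι] [Nonempty ι] {mα : MeasurableSpace α}
    {μ : Measure α} [IsProbabilityMeasure μ] {f : α → ENNReal} (hf : Measurable f) {q : ℕ}
    (hq : 1 ≤ q) :
    ∫⁻ z, ((Fintype.card ι : ENNReal)⁻¹ * ∑ i, f (z i)) ^ q ∂(Measure.pi fun _ : ι => μ) ≤
      ∫⁻ y, f y ^ q ∂μ := by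
  have hcard : (Fintype.card ι : ENNReal)⁻¹ * Fintype.card ι = 1 :=
    ENNReal.inv_mul_cancel (by simp) (by simp)
  have hmean (z : ι → α) : ((Fintype.card ι : ENNReal)⁻¹ * ∑ i, f (z i)) ^ q ≤
      (Fintype.card ι : ENNReal)⁻¹ * ∑ i, f (z i) ^ q := by
    have h := ENNReal.rpow_arith_mean_le_arith_mean_rpow Finset.univ
      (fun _ : ι => (Fintype.card ι : ENNReal)⁻¹) (fun i => f (z i))
      (by simpa [mul_comm] using hcard) (p := q) (by exact_mod_cast hq)
    simpa only [← Finset.mul_sum, ENNReal.rpow_natCast] using h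
  have heval (i : ι) : ∫⁻ z, f (z i) ^ q ∂(Measure.pi fun _ : ι => μ) = ∫⁻ y, f y ^ q ∂μ :=
    (measurePreserving_eval (fun _ : ι => μ) i).lintegral_comp (hf.pow_const q)
  calc _ ≤ ∫⁻ z, (Fintype.card ι : ENNReal)⁻¹ * ∑ i, f (z i) ^ q ∂(Measure.pi fun _ : ι => μ) :=
        lintegral_mono hmean
    _ = ∫⁻ y, f y ^ q ∂μ := by
        rw [lintegral_const_mul _ (by fun_prop), lintegral_finsetSum _ (fun i _ => by fun_prop)]
        simp_rw [heval]
        rw [Finset.sum_const, Finset.card_univ, nsmul_eq_mul, ← mul_assoc, hcard, one_mul]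

section WhitenedError

variable {p k b : ℕ}

instance (M : Matrix (Fin p) (Fin p) ℝ) (σ : ℝ) : IsProbabilityMeasure (batchLaw k b M σ) := by
  unfold batchLaw
  infer_instance

lemma batchLaw_one (k b : ℕ) (σ : ℝ) :
    batchLaw k b (1 : Matrix (Fin p) (Fin p) ℝ) σ =
      (Measure.pi fun _ : Fin b => Measure.pi fun _ : Fin k =>
        stdGaussian (EuclideanSpace ℝ (Fin p))).prod
      (Measure.pi fun _ : Fin b => Measure.pi fun _ : Fin k =>
        gaussianReal 0 (σ ^ 2).toNNReal) := by
  rw [batchLaw, multivariateGaussian_zero_one]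

lemma batchAvgLeastSquares_zero (ω : BatchDesigns p k b × BatchNoises k b) :
    batchAvgLeastSquares 0 ω =
      (1 / (b : ℝ)) • ∑ s, leastSquaresMatrix (designMatrix (ω.1 s)) *ᵥ ω.2 s := by
  simp only [batchAvgLeastSquares, mulVec_zero, zero_add,
    leastSquares_eq_leastSquaresMatrix_mulVec]

lemma batchAvgLeastSquares_zero_apply (ω : BatchDesigns p k b × BatchNoises k b) (j : Fin p) :
    batchAvgLeastSquares 0 ω j =
      1 / (b : ℝ) * ∑ s, (leastSquaresMatrix (designMatrix (ω.1 s))).row j ⬝ᵥ ω.2 s := by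
  simp only [batchAvgLeastSquares_zero, Pi.smul_apply, Finset.sum_apply, smul_eq_mul, mulVec,
    row_apply']

lemma measurable_batchAvgLeastSquares_zero (j : Fin p) :
    Measurable fun ω : BatchDesigns p k b × BatchNoises k b => batchAvgLeastSquares 0 ω j := by
  simp only [batchAvgLeastSquares_zero_apply, dotProduct]
  have hrow (s : Fin b) (r : Fin k) : Measurable fun ω : BatchDesigns p k b × BatchNoises k b =>
      (leastSquaresMatrix (designMatrix (ω.1 s))).row j r :=
    (EuclideanSpace.proj (𝕜 := ℝ) r).measurable.comp
      ((measurable_leastSquaresMatrix_designMatrix_row j).comp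
        ((measurable_pi_apply s).comp measurable_fst))
  fun_prop

lemma hasSubgaussianMGF_batchAvgLeastSquares_zero (x : BatchDesigns p k b) (v : NNReal)
    (j : Fin p) :
    HasSubgaussianMGF (fun η => batchAvgLeastSquares 0 (x, η) j)
      ((b : NNReal)⁻¹ * ((b : NNReal)⁻¹ *
        ∑ s, ‖WithLp.toLp 2 ((leastSquaresMatrix (designMatrix (x s))).row j)‖₊ ^ 2) * v)
      (Measure.pi fun _ : Fin b => Measure.pi fun _ : Fin k => gaussianReal 0 v) := by
  simp only [batchAvgLeastSquares_zero_apply]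
  have hsum := (hasSubgaussianMGF_sum_pi fun s => hasSubgaussianMGF_dotProduct_pi_gaussianReal v
    ((leastSquaresMatrix (designMatrix (x s))).row j)).const_mul (1 / (b : ℝ))
  have hinv : NNReal.mk ((1 / (b : ℝ)) ^ 2) (sq_nonneg _) = (b : NNReal)⁻¹ * (b : NNReal)⁻¹ := by
    ext
    simp [sq]
  rw [← Finset.sum_mul] at hsum
  rw [← mul_assoc, mul_assoc, ← hinv]
  exact hsum

lemma pi_gaussianReal_le_sq_batchAvgLeastSquares_zero_le (hb : 0 < b) (x : BatchDesigns p k b)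
    {v t : NNReal} (hv : v ≠ 0) (ht : t ≠ 0) (q : ℕ) (j : Fin p) :
    (Measure.pi fun _ : Fin b => Measure.pi fun _ : Fin k => gaussianReal 0 v)
        {η | ((v * t : NNReal) : ℝ) ≤ batchAvgLeastSquares 0 (x, η) j ^ 2} ≤
      2 * q.factorial * (2 / (b * t : ENNReal)) ^ q * ((b : ENNReal)⁻¹ *
        ∑ s, ‖WithLp.toLp 2 ((leastSquaresMatrix (designMatrix (x s))).row j)‖ₑ ^ 2) ^ q := by
  have hb' : (b : NNReal) ≠ 0 := by exact_mod_cast hb.ne'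
  refine (measure_le_sq_le_factorial_mul_pow
    (hasSubgaussianMGF_batchAvgLeastSquares_zero x v j) (mul_ne_zero hv ht) q).trans_eq ?_
  rw [mul_assoc _ (_ ^ q), ← mul_pow]
  congr 2
  simp only [enorm, ← ENNReal.coe_pow, ← ENNReal.coe_natCast (b : ℕ), ← ENNReal.coe_inv hb',
    ← ENNReal.ofNNReal_finsetSum, ← ENNReal.coe_mul, ← ENNReal.coe_ofNat]
  rw [← ENNReal.coe_div (mul_ne_zero hv ht), ← ENNReal.coe_div (mul_ne_zero hb' ht),
    ← ENNReal.coe_mul, ENNReal.coe_inj]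
  field_simp

lemma batchLaw_one_le_sq_batchAvgLeastSquares_zero_le {σ : ℝ} (hσ : σ ≠ 0) (hb : 0 < b) {q : ℕ}
    (hq : 0 < q) (hk : p + 4 * q ≤ k) {t : NNReal} (ht : t ≠ 0) (j : Fin p) :
    batchLaw k b 1 σ {ω | σ ^ 2 * t ≤ batchAvgLeastSquares 0 ω j ^ 2} ≤
      2 * q.factorial * (2 / (b * t : ENNReal)) ^ q *
        (((k - p : ℕ) : ENNReal)⁻¹ * gaussianInvSqNorm) ^ q := by
  have hv : (σ ^ 2).toNNReal ≠ 0 := (Real.toNNReal_pos.2 (by positivity)).ne'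
  have : Nonempty (Fin b) := ⟨⟨0, hb⟩⟩
  have hrow := (measurable_leastSquaresMatrix_designMatrix_row (k := k) j).enorm.pow_const 2
  have hmean := (lintegral_pi_mean_pow_le (ι := Fin b) hrow hq).trans
    (lintegral_leastSquaresMatrix_designMatrix_row_pow_le hq hk j)
  rw [Fintype.card_fin] at hmean
  rw [batchLaw_one, Measure.prod_apply (measurableSet_le measurable_const
    ((measurable_batchAvgLeastSquares_zero j).pow_const 2))]
  refine (lintegral_mono fun x => ?_).trans
    ((lintegral_const_mul _ ?_).trans_le (mul_le_mul_right hmean _))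
  · have hnoise := pi_gaussianReal_le_sq_batchAvgLeastSquares_zero_le hb x hv ht q j
    rw [NNReal.coe_mul, Real.coe_toNNReal _ (sq_nonneg σ)] at hnoise
    exact hnoise
  · exact ((Finset.measurable_sum _ fun s _ =>
      hrow.comp (measurable_pi_apply s)).const_mul _).pow_const q

end WhitenedError

section TailBound

lemma factorial_mul_pow_le_pow {a c : ℝ} (ha : 0 ≤ a) {q : ℕ} (h : q * a ≤ c) :
    q.factorial * a ^ q ≤ c ^ q :=
  calc (q.factorial : ℝ) * a ^ q ≤ (q : ℝ) ^ q * a ^ q := by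
        gcongr
        exact_mod_cast q.factorial_le_pow
    _ = (q * a) ^ q := (mul_pow _ _ _).symm
    _ ≤ c ^ q := by gcongr

lemma mul_two_mul_exp_neg_two_pow_le {p q : ℕ} {l : ℝ} (hl : 0 ≤ l) (hq : p + l ≤ q) :
    p * (2 * Real.exp (-2) ^ q) ≤ Real.exp (-l) := by
  have hpow : Real.exp (-2) ^ q ≤ Real.exp (-(2 * p)) * Real.exp (-l) := by
    rw [← Real.exp_nat_mul, ← Real.exp_add]
    gcongr
    linarith
  have hlin : 2 * (p : ℝ) * Real.exp (-(2 * p)) ≤ 1 := by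
    rw [Real.exp_neg, ← div_eq_mul_inv, div_le_one (Real.exp_pos _)]
    linarith [Real.add_one_le_exp (2 * (p : ℝ))]
  calc p * (2 * Real.exp (-2) ^ q) ≤ p * (2 * (Real.exp (-(2 * p)) * Real.exp (-l))) := by gcongr
    _ = (2 * p * Real.exp (-(2 * p))) * Real.exp (-l) := by ring
    _ ≤ Real.exp (-l) := mul_le_of_le_one_left (Real.exp_nonneg _) hlin

variable {p k b q : ℕ} {σ t : ℝ}

lemma batchLaw_one_real_exists_le_sq_batchAvgLeastSquares_zero_le (hσ : σ ≠ 0) (hb : 0 < b)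
    (hq : 0 < q) (hk : p + 4 * q ≤ k) (ht : 0 < t) :
    (batchLaw k b 1 σ).real {ω | ∃ j : Fin p, σ ^ 2 * t ≤ batchAvgLeastSquares 0 ω j ^ 2} ≤
      p * (2 * (q.factorial *
        (2 / (b * t) * (((k - p : ℕ) : ℝ)⁻¹ * gaussianInvSqNorm.toReal)) ^ q)) := by
  lift t to NNReal using ht.le
  have ht0 : t ≠ 0 := by exact_mod_cast ht.ne'
  have hcoord (j : Fin p) :
      (batchLaw k b 1 σ).real {ω | σ ^ 2 * t ≤ batchAvgLeastSquares 0 ω j ^ 2} ≤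
        2 * (q.factorial *
          (2 / (b * t) * (((k - p : ℕ) : ℝ)⁻¹ * gaussianInvSqNorm.toReal)) ^ q) := by
    have hbt : (b * t : ENNReal) ≠ 0 := by simp [hb.ne', ht0]
    have hkp : ((k - p : ℕ) : ENNReal) ≠ 0 := by exact_mod_cast (by omega : k - p ≠ 0)
    have hκ := gaussianInvSqNorm_ne_top
    have h := ENNReal.toReal_mono (by finiteness)
      (batchLaw_one_le_sq_batchAvgLeastSquares_zero_le hσ hb hq hk ht0 j)
    simpa only [Measure.real, ENNReal.toReal_mul, ENNReal.toReal_pow, ENNReal.toReal_div,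
      ENNReal.toReal_inv, ENNReal.toReal_natCast, ENNReal.toReal_ofNat, ENNReal.coe_toReal,
      mul_pow, mul_assoc] using h
  rw [Set.ofPred_exists]
  calc _ ≤ ∑ j : Fin p, (batchLaw k b 1 σ).real
          {ω | σ ^ 2 * t ≤ batchAvgLeastSquares 0 ω j ^ 2} := measureReal_iUnion_fintype_le _
    _ ≤ _ := (Finset.sum_le_sum fun j _ => hcoord j).trans_eq (by simp)

lemma batchLaw_one_real_exists_le_sq_batchAvgLeastSquares_zero_le_exp {l : ℝ} (hσ : σ ≠ 0)
    (hp : 1 ≤ p) (hb : 0 < b) (hl : 0 ≤ l) (ht : 0 < t) (hk : 9 * (p + l) ≤ k)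
    (hkb : 8 * (gaussianInvSqNorm.toReal + 1) * Real.exp 2 * (p + l) ≤ k * b * t) :
    (batchLaw k b 1 σ).real {ω | ∃ j : Fin p, σ ^ 2 * t ≤ batchAvgLeastSquares 0 ω j ^ 2} ≤
      Real.exp (-l) := by
  set κ := gaussianInvSqNorm.toReal
  have hp' : (1 : ℝ) ≤ p := by exact_mod_cast hp
  obtain ⟨q, hql, hqu⟩ : ∃ q : ℕ, p + l ≤ q ∧ q ≤ 2 * (p + l) :=
    ⟨⌈p + l⌉₊, Nat.le_ceil _, by linarith [Nat.ceil_lt_add_one (show 0 ≤ p + l by positivity)]⟩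
  have hq : 0 < q := by exact_mod_cast (by linarith : (0 : ℝ) < q)
  have hkq : p + 4 * q ≤ k := by exact_mod_cast (by linarith : (p + 4 * q : ℝ) ≤ k)
  have hm : k ≤ 2 * ((k - p : ℕ) : ℝ) := by
    rw [Nat.cast_sub (by omega)]
    linarith
  have hbase : q * (2 / (b * t) * (((k - p : ℕ) : ℝ)⁻¹ * κ)) ≤ Real.exp (-2) := by
    have hm0 : (0 : ℝ) < (k - p : ℕ) := by linarith
    have hkbt : 8 * (κ + 1) * Real.exp 2 * (p + l) ≤ 2 * ((k - p : ℕ) : ℝ) * b * t :=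
      hkb.trans (by gcongr)
    have hκq : κ * q * Real.exp 2 ≤ (κ + 1) * (2 * (p + l)) * Real.exp 2 := by gcongr; linarith
    calc _ = 2 * (κ * q * Real.exp 2) / ((k - p : ℕ) * b * t) * Real.exp (-2) := by
          rw [Real.exp_neg]
          field_simp
      _ ≤ Real.exp (-2) := mul_le_of_le_one_left (Real.exp_nonneg _)
          ((div_le_one (by positivity)).2 (by linarith))
  calc _ ≤ _ := batchLaw_one_real_exists_le_sq_batchAvgLeastSquares_zero_le hσ hb hq hkq ht
    _ ≤ p * (2 * Real.exp (-2) ^ q) := by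
        gcongr
        exact factorial_mul_pow_le_pow (by positivity) hbase
    _ ≤ Real.exp (-l) := mul_two_mul_exp_neg_two_pow_le hl hql

end TailBound

section Whitening

open scoped MatrixOrder

section Sqrt

variable {ι : Type*} [Fintype ι] [DecidableEq ι] {M : Matrix ι ι ℝ}

lemma transpose_sqrt (M : Matrix ι ι ℝ) : (CFC.sqrt M)ᵀ = CFC.sqrt M := by
  rw [← conjTranspose_eq_transpose_of_trivial]
  exact (CFC.sqrt_nonneg M).isSelfAdjoint

lemma isUnit_det_sqrt (hM : M.PosDef) : IsUnit (CFC.sqrt M).det := by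
  have h := hM.det_pos.ne'
  rw [← CFC.sqrt_mul_sqrt_self M hM.posSemidef.nonneg, det_mul] at h
  exact (left_ne_zero_of_mul h).isUnit

lemma dotProduct_mulVec_eq_sum_sq_sqrt_mulVec (hM : M.PosSemidef) (u : ι → ℝ) :
    u ⬝ᵥ (M *ᵥ u) = ∑ j, (CFC.sqrt M *ᵥ u) j ^ 2 := by
  nth_rw 1 [← CFC.sqrt_mul_sqrt_self M hM.nonneg]
  rw [← mulVec_mulVec, dotProduct_mulVec, ← mulVec_transpose, transpose_sqrt]
  simp only [dotProduct, sq]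

end Sqrt

variable {p k b : ℕ} {M : Matrix (Fin p) (Fin p) ℝ}

/-- Turns data with standard Gaussian designs into data with designs of covariance `M`, by applying
the positive square root of `M` to every row. -/
noncomputable def colorDesigns (M : Matrix (Fin p) (Fin p) ℝ)
    (ω : BatchDesigns p k b × BatchNoises k b) : BatchDesigns p k b × BatchNoises k b :=
  (fun s r => toEuclideanCLM (𝕜 := ℝ) (CFC.sqrt M) (ω.1 s r), ω.2)

lemma measurePreserving_colorDesigns (k b : ℕ) (M : Matrix (Fin p) (Fin p) ℝ) (σ : ℝ) :
    MeasurePreserving (colorDesigns M) (batchLaw k b 1 σ) (batchLaw k b M σ) := by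
  have hrow : MeasurePreserving (toEuclideanCLM (𝕜 := ℝ) (CFC.sqrt M))
      (stdGaussian (EuclideanSpace ℝ (Fin p))) (multivariateGaussian 0 M) :=
    ⟨by fun_prop, by simp only [multivariateGaussian, zero_add]⟩
  rw [batchLaw_one]
  exact (measurePreserving_pi _ _ fun _ => measurePreserving_pi _ _ fun _ => hrow).prod
    (MeasurePreserving.id _)

lemma designMatrix_colorDesigns (ω : BatchDesigns p k b × BatchNoises k b) (s : Fin b) :
    designMatrix ((colorDesigns M ω).1 s) = designMatrix (ω.1 s) * CFC.sqrt M := by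
  rw [← transpose_sqrt M]
  ext r j
  simp [designMatrix, colorDesigns, mul_apply, mulVec, dotProduct, mul_comm]

lemma mulVec_leastSquares_mul_sub {Z : Matrix (Fin k) (Fin p) ℝ} {R : Matrix (Fin p) (Fin p) ℝ}
    (hR : IsUnit R.det) (hZ : IsUnit (Zᵀ * Z).det) (A : Fin p → ℝ) (η : Fin k → ℝ) :
    R *ᵥ (leastSquares (Z * R) ((Z * R) *ᵥ A + η) - A) = leastSquaresMatrix Z *ᵥ η := by
  rw [leastSquares_eq_leastSquaresMatrix_mulVec, mulVec_sub, mulVec_mulVec,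
    mul_leastSquaresMatrix_mul Z hR, mulVec_add, mulVec_mulVec, ← Matrix.mul_assoc,
    leastSquaresMatrix_mul_self hZ, Matrix.one_mul, add_sub_cancel_left]

lemma sqrt_mulVec_batchAvgLeastSquares_colorDesigns_sub (hM : M.PosDef) (hb : 0 < b)
    (A : Fin p → ℝ) {ω : BatchDesigns p k b × BatchNoises k b}
    (hω : ∀ s, IsUnit ((designMatrix (ω.1 s))ᵀ * designMatrix (ω.1 s)).det) :
    CFC.sqrt M *ᵥ (batchAvgLeastSquares A (colorDesigns M ω) - A) = batchAvgLeastSquares 0 ω := by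
  have hA : A = (1 / (b : ℝ)) • ∑ _s : Fin b, A := by
    simp [← Nat.cast_smul_eq_nsmul ℝ, smul_smul, hb.ne']
  nth_rw 2 [hA]
  rw [batchAvgLeastSquares_zero, batchAvgLeastSquares, ← smul_sub, ← Finset.sum_sub_distrib,
    mulVec_smul, mulVec_sum]
  congr! 2 with s
  rw [designMatrix_colorDesigns]
  exact mulVec_leastSquares_mul_sub (isUnit_det_sqrt hM) (hω s) A (ω.2 s)

lemma ae_batchLaw_one_isUnit_det (hpk : p ≤ k) (σ : ℝ) :
    ∀ᵐ ω ∂batchLaw (p := p) k b 1 σ,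
      ∀ s, IsUnit ((designMatrix (ω.1 s))ᵀ * designMatrix (ω.1 s)).det := by
  rw [batchLaw_one]
  exact Measure.quasiMeasurePreserving_fst.ae <| ae_all_iff.2 fun s =>
    (measurePreserving_eval _ s).quasiMeasurePreserving.ae
      (ae_isUnit_det_transpose_mul_self_designMatrix hpk)

lemma one_sub_le_batchLaw_real (hM : M.PosDef) (hpk : p ≤ k) (hb : 0 < b) (A : Fin p → ℝ)
    (σ θ : ℝ) :
    1 - (batchLaw k b 1 σ).real {ω | ∃ j : Fin p, θ ≤ batchAvgLeastSquares 0 ω j ^ 2} ≤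
      (batchLaw k b M σ).real
        {ω | |(batchAvgLeastSquares A ω - A) ⬝ᵥ (M *ᵥ (batchAvgLeastSquares A ω - A))| ≤
          p * θ} := by
  set bad := {ω : BatchDesigns p k b × BatchNoises k b |
    ∃ j, θ ≤ batchAvgLeastSquares 0 ω j ^ 2} with hbad
  have hbad_meas : MeasurableSet bad := by
    rw [hbad, Set.ofPred_exists]
    exact .iUnion fun j =>
      measurableSet_le measurable_const ((measurable_batchAvgLeastSquares_zero j).pow_const 2)
  have hcolor := measurePreserving_colorDesigns k b M σ
  rw [← probReal_compl_eq_one_sub hbad_meas]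
  refine ENNReal.toReal_mono (by finiteness) ((measure_mono_ae ?_).trans
    (hcolor.map_eq ▸ Measure.le_map_apply hcolor.measurable.aemeasurable _))
  filter_upwards [ae_batchLaw_one_isUnit_det hpk σ] with ω hω hgood
  have hle (j : Fin p) : batchAvgLeastSquares 0 ω j ^ 2 ≤ θ :=
    (not_le.1 fun h => hgood ⟨j, h⟩).le
  change |_| ≤ p * θ
  rw [dotProduct_mulVec_eq_sum_sq_sqrt_mulVec hM.posSemidef,
    sqrt_mulVec_batchAvgLeastSquares_colorDesigns_sub hM hb A hω,
    abs_of_nonneg (Finset.sum_nonneg fun j _ => sq_nonneg _)]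
  exact (Finset.sum_le_sum fun j _ => hle j).trans_eq (by simp)

end Whitening

lemma one_sub_exp_neg_le_batchLaw_real {p k b : ℕ} {M : Matrix (Fin p) (Fin p) ℝ} (hM : M.PosDef)
    (A : Fin p → ℝ) {σ l t : ℝ} (hσ : σ ≠ 0) (hp : 1 ≤ p) (hl : 0 ≤ l) (ht : 0 < t)
    (hk : 9 * (p + l) ≤ k)
    (hkb : 8 * (gaussianInvSqNorm.toReal + 1) * Real.exp 2 * (p + l) ≤ k * b * t) :
    1 - Real.exp (-l) ≤ (batchLaw k b M σ).real
      {ω | |(batchAvgLeastSquares A ω - A) ⬝ᵥ (M *ᵥ (batchAvgLeastSquares A ω - A))| ≤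
        p * (σ ^ 2 * t)} := by
  have hp' : (1 : ℝ) ≤ p := by exact_mod_cast hp
  have hpk : p ≤ k := by exact_mod_cast (by linarith : (p : ℝ) ≤ k)
  have hb : 0 < b := by
    have hpos : 0 < k * b * t := lt_of_lt_of_le (by positivity) hkb
    refine Nat.pos_of_ne_zero fun hb => ?_
    simp [hb] at hpos
  linarith [one_sub_le_batchLaw_real hM hpk hb A σ (σ ^ 2 * t),
    batchLaw_one_real_exists_le_sq_batchAvgLeastSquares_zero_le_exp hσ hp hb hl ht hk hkb]

theorem stmt_8 : ∃ Ck Ckb : ℝ, 0 < Ck ∧ 0 < Ckb ∧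
    ∀ (p d : ℕ) (_ : 1 ≤ p) (_ : p ≤ d)
      (M : Matrix (Fin p) (Fin p) ℝ) (_ : M.PosDef)
      (A : Fin p → ℝ) (σy : ℝ) (_ : 0 < σy)
      (n davg ε δ : ℝ) (_ : 1 ≤ n) (_ : 0 < davg) (_ : 0 < ε) (_ : ε < 1)
      (_ : 0 < δ) (_ : δ < 1) (k b : ℕ),
      Ck * ((p : ℝ) + Real.log (n / (ε * δ))) ≤ (k : ℝ) →
      Ckb * (n * davg / ε) * ((d : ℝ) + Real.log (n / (ε * δ))) ≤ (k : ℝ) * (b : ℝ) →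
      1 - δ ≤ (batchLaw k b M σy).real
        {ω | |(batchAvgLeastSquares A ω - A) ⬝ᵥ (M *ᵥ (batchAvgLeastSquares A ω - A))|
              ≤ σy ^ 2 * (ε * (p : ℝ) / (n * davg))} := by
  refine ⟨9, 8 * (gaussianInvSqNorm.toReal + 1) * Real.exp 2, by norm_num, by positivity, ?_⟩
  intro p d hp hpd M hM A σy hσy n davg ε δ hn hdavg hε hε1 hδ hδ1 k b hk hkb
  have hδ_inv : δ⁻¹ ≤ n / (ε * δ) := by
    rw [inv_eq_one_div, div_le_div_iff₀ hδ (by positivity)]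
    nlinarith
  set l := Real.log (n / (ε * δ)) with hl_def
  have hl : 0 ≤ l := Real.log_nonneg (((one_le_inv₀ hδ).2 hδ1.le).trans hδ_inv)
  have hexp : Real.exp (-l) ≤ δ := by
    rw [Real.exp_neg, hl_def, Real.exp_log (by positivity)]
    exact inv_le_of_inv_le₀ hδ hδ_inv
  have hkb' : 8 * (gaussianInvSqNorm.toReal + 1) * Real.exp 2 * (p + l) ≤
      k * b * (ε / (n * davg)) :=
    calc _ ≤ 8 * (gaussianInvSqNorm.toReal + 1) * Real.exp 2 * (d + l) := by gcongr
      _ = 8 * (gaussianInvSqNorm.toReal + 1) * Real.exp 2 * (n * davg / ε) * (d + l) *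
          (ε / (n * davg)) := by field_simp
      _ ≤ k * b * (ε / (n * davg)) := by gcongr
  have hgood := one_sub_exp_neg_le_batchLaw_real hM A hσy.ne' hp hl (by positivity) hk hkb'
  rw [show p * (σy ^ 2 * (ε / (n * davg))) = σy ^ 2 * (ε * p / (n * davg)) by ring] at hgood
  linarith
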